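/- For arbitrary matrices A_k (not necessarily of full column or row rank), for every r ≥ 0 the cyclic exact BCD iterates satisfy Δ^{(r+1)} ≤ 3 · max{ Δ^{(0)}, 2 R_0² · L_max · (1 + K²) } / (r+1), where Δ^{(r)} := f(x^{(r)}) − f*. -/

import Mathlib

open Finset

/-- Squared Euclidean norm of a vector in `ℝ^n`. -/
noncomputable def sqnorm {n : ℕ} (v : Fin n → ℝ) : ℝ := ∑ i, v i ^ 2

/-- Euclidean inner product on `ℝ^n`. -/
noncomputable def dotp {n : ℕ} (u v : Fin n → ℝ) : ℝ := ∑ i, u i * v i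

/-- `λ_max(AᵀA)` for a real matrix `A`, characterized as the maximum of `‖Av‖²`
over unit vectors `v`. -/
noncomputable def lamMaxQ {M N : ℕ} (A : Matrix (Fin M) (Fin N) ℝ) : ℝ :=
  sSup {r : ℝ | ∃ v : Fin N → ℝ, sqnorm v = 1 ∧ r = sqnorm (A.mulVec v)}

/-- `λ_min(AᵀA)` for a real matrix `A`, characterized as the minimum of `‖Av‖²`
over unit vectors `v`. -/
noncomputable def lamMinQ {M N : ℕ} (A : Matrix (Fin M) (Fin N) ℝ) : ℝ :=
  sInf {r : ℝ | ∃ v : Fin N → ℝ, sqnorm v = 1 ∧ r = sqnorm (A.mulVec v)}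

/-- `λ_max(AᵀA)` for the concatenated matrix `A = [A_1 ⋯ A_K]`, acting on block
vectors. -/
noncomputable def lamMaxBlock {K M N : ℕ} (A : Fin K → Matrix (Fin M) (Fin N) ℝ) : ℝ :=
  sSup {r : ℝ | ∃ v : Fin K → Fin N → ℝ, (∑ k, sqnorm (v k)) = 1 ∧
    r = sqnorm (∑ k, (A k).mulVec (v k))}

/-- Maximum of a finite family of reals indexed by `Fin K`, `K ≥ 1`. -/
noncomputable def maxOf {K : ℕ} (hK : 1 ≤ K) (P : Fin K → ℝ) : ℝ :=
  Finset.univ.sup' (Finset.univ_nonempty_iff.mpr ⟨⟨0, hK⟩⟩) P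

/-- Minimum of a finite family of reals indexed by `Fin K`, `K ≥ 1`. -/
noncomputable def minOf {K : ℕ} (hK : 1 ≤ K) (P : Fin K → ℝ) : ℝ :=
  Finset.univ.inf' (Finset.univ_nonempty_iff.mpr ⟨⟨0, hK⟩⟩) P

/-- The residual `Σ_k A_k x_k − b`. -/
noncomputable def resid {K M N : ℕ} (A : Fin K → Matrix (Fin M) (Fin N) ℝ)
    (b : Fin M → ℝ) (x : Fin K → Fin N → ℝ) : Fin M → ℝ :=
  (∑ k, (A k).mulVec (x k)) - b

/-- The smooth part `g(x) = (1/2)‖Σ_k A_k x_k − b‖²`. -/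
noncomputable def gq {K M N : ℕ} (A : Fin K → Matrix (Fin M) (Fin N) ℝ)
    (b : Fin M → ℝ) (x : Fin K → Fin N → ℝ) : ℝ :=
  (1 / 2) * sqnorm (resid A b x)

/-- The objective `f(x) = g(x) + Σ_k h_k(x_k)`. -/
noncomputable def fq {K M N : ℕ} (A : Fin K → Matrix (Fin M) (Fin N) ℝ)
    (b : Fin M → ℝ) (h : Fin K → (Fin N → ℝ) → ℝ) (x : Fin K → Fin N → ℝ) : ℝ :=
  gq A b x + ∑ k, h k (x k)

/-- The partial gradient `∇_k g(x) = A_kᵀ (Σ_j A_j x_j − b)`. -/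
noncomputable def gradk {K M N : ℕ} (A : Fin K → Matrix (Fin M) (Fin N) ℝ)
    (b : Fin M → ℝ) (x : Fin K → Fin N → ℝ) (k : Fin K) : Fin N → ℝ :=
  ((A k).transpose).mulVec (resid A b x)

/-- The intermediate point `w_k^{(r+1)}` of the cycle: blocks `j < k` come from
`x^{(r+1)} = xp`, the remaining blocks from `x^{(r)} = x`. -/
def wpt {K N : ℕ} (x xp : Fin K → Fin N → ℝ) (k : Fin K) : Fin K → Fin N → ℝ :=
  fun j => if j < k then xp j else x j

/-- The objective of the `k`-th BCPG prox subproblem at the point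
`w_k^{(r+1)} = wpt x xp k`, evaluated at candidate block `y`. -/
noncomputable def bcpgObj {K M N : ℕ} (A : Fin K → Matrix (Fin M) (Fin N) ℝ)
    (b : Fin M → ℝ) (h : Fin K → (Fin N → ℝ) → ℝ) (P : Fin K → ℝ)
    (x xp : Fin K → Fin N → ℝ) (k : Fin K) (y : Fin N → ℝ) : ℝ :=
  dotp (gradk A b (wpt x xp k) k) (y - x k) + (P k / 2) * sqnorm (y - x k) + h k y

/-- One cycle of cyclic BCPG: `xp = x^{(r+1)}` is obtained from `x = x^{(r)}`
by letting, for `k = 1,…,K`, the `k`-th block minimize the prox subproblem at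
`w_k^{(r+1)}` over `X_k`. -/
def BCPGStep {K M N : ℕ} (A : Fin K → Matrix (Fin M) (Fin N) ℝ)
    (b : Fin M → ℝ) (h : Fin K → (Fin N → ℝ) → ℝ)
    (X : Fin K → Set (Fin N → ℝ)) (P : Fin K → ℝ)
    (x xp : Fin K → Fin N → ℝ) : Prop :=
  ∀ k : Fin K, xp k ∈ X k ∧ ∀ y ∈ X k,
    bcpgObj A b h P x xp k (xp k) ≤ bcpgObj A b h P x xp k y

/-- One cycle of cyclic exact BCD: `xp = x^{(r+1)}` is obtained from
`x = x^{(r)}` by letting, for `k = 1,…,K`, the `k`-th block minimize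
`f(x_1^{(r+1)},…,x_{k−1}^{(r+1)}, ·, x_{k+1}^{(r)},…,x_K^{(r)})` over `X_k`. -/
def BCDStep {K M N : ℕ} (A : Fin K → Matrix (Fin M) (Fin N) ℝ)
    (b : Fin M → ℝ) (h : Fin K → (Fin N → ℝ) → ℝ)
    (X : Fin K → Set (Fin N → ℝ))
    (x xp : Fin K → Fin N → ℝ) : Prop :=
  ∀ k : Fin K, xp k ∈ X k ∧ ∀ y ∈ X k,
    fq A b h (Function.update (wpt x xp k) k (xp k)) ≤
      fq A b h (Function.update (wpt x xp k) k y)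

lemma sqn_nonneg {n : ℕ} (v : Fin n → ℝ) : 0 ≤ sqnorm v :=
  Finset.sum_nonneg fun i _ => sq_nonneg _

lemma sqn_add {n : ℕ} (u v : Fin n → ℝ) :
    sqnorm (u + v) = sqnorm u + 2 * dotp u v + sqnorm v := by
  unfold sqnorm dotp
  rw [Finset.mul_sum, ← Finset.sum_add_distrib, ← Finset.sum_add_distrib]
  refine Finset.sum_congr rfl fun i _ => ?_
  simp only [Pi.add_apply]; ring

lemma sqn_smul {n : ℕ} (t : ℝ) (v : Fin n → ℝ) : sqnorm (t • v) = t ^ 2 * sqnorm v := by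
  unfold sqnorm
  rw [Finset.mul_sum]
  refine Finset.sum_congr rfl fun i _ => ?_
  simp only [Pi.smul_apply, smul_eq_mul]; ring

lemma dotp_smul' {n : ℕ} (t : ℝ) (u v : Fin n → ℝ) : dotp u (t • v) = t * dotp u v := by
  unfold dotp
  rw [Finset.mul_sum]
  refine Finset.sum_congr rfl fun i _ => ?_
  simp only [Pi.smul_apply, smul_eq_mul]; ring

lemma dotp_neg' {n : ℕ} (u v : Fin n → ℝ) : dotp u (-v) = - dotp u v := by
  unfold dotp
  simp

lemma sqn_neg {n : ℕ} (v : Fin n → ℝ) : sqnorm (-v) = sqnorm v := by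
  unfold sqnorm
  simp

lemma dotp_sub_left' {n : ℕ} (u v w : Fin n → ℝ) : dotp (u - v) w = dotp u w - dotp v w := by
  unfold dotp
  rw [← Finset.sum_sub_distrib]
  refine Finset.sum_congr rfl fun i _ => ?_
  simp only [Pi.sub_apply]; ring

lemma dotp_sum_right {n K : ℕ} (u : Fin n → ℝ) (v : Fin K → Fin n → ℝ) :
    dotp u (∑ k, v k) = ∑ k, dotp u (v k) := by
  unfold dotp
  rw [Finset.sum_comm]
  refine Finset.sum_congr rfl fun i _ => ?_
  rw [Finset.sum_apply, Finset.mul_sum]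

lemma sqn_sum_le {n K : ℕ} (v : Fin K → Fin n → ℝ) :
    sqnorm (∑ k, v k) ≤ K * ∑ k, sqnorm (v k) := by
  unfold sqnorm
  rw [Finset.sum_comm, Finset.mul_sum]
  refine Finset.sum_le_sum fun i _ => ?_
  rw [Finset.sum_apply]
  have := sq_sum_le_card_mul_sum_sq (s := (Finset.univ : Finset (Fin K))) (f := fun k => v k i)
  simpa using this

lemma cs_block {n K : ℕ} (u v : Fin K → Fin n → ℝ) :
    (∑ k, dotp (u k) (v k)) ^ 2 ≤ (∑ k, sqnorm (u k)) * ∑ k, sqnorm (v k) := by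
  have := Finset.sum_mul_sq_le_sq_mul_sq (Finset.univ : Finset (Fin K × Fin n))
    (fun p => u p.1 p.2) (fun p => v p.1 p.2)
  simpa only [Fintype.sum_prod_type, sqnorm, dotp] using this

lemma sqn_mulVec_bdd {M N : ℕ} (A : Matrix (Fin M) (Fin N) ℝ) (v : Fin N → ℝ) :
    sqnorm (A.mulVec v) ≤ (∑ i, ∑ j, A i j ^ 2) * sqnorm v := by
  rw [Finset.sum_mul]
  refine Finset.sum_le_sum fun i _ => ?_
  exact Finset.sum_mul_sq_le_sq_mul_sq Finset.univ (fun j => A i j) v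

lemma lam_bound {M N : ℕ} (A : Matrix (Fin M) (Fin N) ℝ) (v : Fin N → ℝ) :
    sqnorm (A.mulVec v) ≤ lamMaxQ A * sqnorm v := by
  have hb := sqn_mulVec_bdd A v
  rcases (sqn_nonneg v).eq_or_lt with h0 | hpos
  · rw [← h0] at hb ⊢
    simpa using hb
  · have hs : Real.sqrt (sqnorm v) ^ 2 = sqnorm v := Real.sq_sqrt hpos.le
    have hsp : 0 < Real.sqrt (sqnorm v) := Real.sqrt_pos.2 hpos
    have hbd : BddAbove {r : ℝ | ∃ v : Fin N → ℝ, sqnorm v = 1 ∧ r = sqnorm (A.mulVec v)} := by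
      refine ⟨∑ i, ∑ j, A i j ^ 2, ?_⟩
      rintro r ⟨w, hw, rfl⟩
      simpa [hw] using sqn_mulVec_bdd A w
    have := le_csSup hbd ⟨(Real.sqrt (sqnorm v))⁻¹ • v, by
      rw [sqn_smul, inv_pow, hs]; exact inv_mul_cancel₀ hpos.ne', rfl⟩
    rw [Matrix.mulVec_smul, sqn_smul, inv_pow, hs] at this
    rw [inv_mul_le_iff₀ hpos] at this
    unfold lamMaxQ
    linarith

lemma lam_nonneg {M N : ℕ} (A : Matrix (Fin M) (Fin N) ℝ) : 0 ≤ lamMaxQ A := by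
  refine Real.sSup_nonneg ?_
  rintro r ⟨w, hw, rfl⟩
  exact sqn_nonneg _

lemma sum_upd {K N : ℕ} {G : Type*} [AddCommGroup G] (F : Fin K → (Fin N → ℝ) → G)
    (w : Fin K → Fin N → ℝ) (k : Fin K) (y : Fin N → ℝ) :
    ∑ j, F j (Function.update w k y j) = ∑ j, F j (w j) + (F k y - F k (w k)) := by
  rw [← sub_eq_iff_eq_add', ← Finset.sum_sub_distrib, Finset.sum_eq_single k]
  · simp
  · intro j _ hj
    simp [Function.update_of_ne hj]
  · simp

lemma fq_upd {K M N : ℕ} (A : Fin K → Matrix (Fin M) (Fin N) ℝ)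
    (b : Fin M → ℝ) (h : Fin K → (Fin N → ℝ) → ℝ) (p : Fin K → Fin N → ℝ) (k : Fin K)
    (y : Fin N → ℝ) :
    fq A b h (Function.update p k y) = fq A b h p +
      (dotp (resid A b p) ((A k).mulVec (y - p k)) + (1/2) * sqnorm ((A k).mulVec (y - p k))
        + (h k y - h k (p k))) := by
  have h1 : resid A b (Function.update p k y) = resid A b p + (A k).mulVec (y - p k) := by
    unfold resid
    rw [sum_upd (fun j z => (A j).mulVec z), Matrix.mulVec_sub]
    abel
  unfold fq gq
  rw [h1, sqn_add, sum_upd h]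
  ring

lemma vi {K M N : ℕ} (A : Fin K → Matrix (Fin M) (Fin N) ℝ)
    (b : Fin M → ℝ) (h : Fin K → (Fin N → ℝ) → ℝ) (p : Fin K → Fin N → ℝ) (k : Fin K)
    (X : Set (Fin N → ℝ)) (hX : Convex ℝ X) (hh : ConvexOn ℝ Set.univ (h k))
    (hp : p k ∈ X) (hmin : ∀ y ∈ X, fq A b h p ≤ fq A b h (Function.update p k y))
    (y : Fin N → ℝ) (hy : y ∈ X) :
    0 ≤ dotp (resid A b p) ((A k).mulVec (y - p k)) + (h k y - h k (p k)) := by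
  set a := dotp (resid A b p) ((A k).mulVec (y - p k)) + (h k y - h k (p k)) with ha
  set q := sqnorm ((A k).mulVec (y - p k)) with hq
  have hq0 : 0 ≤ q := sqn_nonneg _
  have key : ∀ t : ℝ, 0 < t → t ≤ 1 → 0 ≤ a + t * q / 2 := by
    intro t ht0 ht1
    have hm := hX hp hy (sub_nonneg.2 ht1) ht0.le (by ring)
    have hc := hh.2 (Set.mem_univ (p k)) (Set.mem_univ y) (sub_nonneg.2 ht1) ht0.le (by ring)
    have h1 := hmin _ hm
    rw [fq_upd] at h1
    have e : (1 - t) • p k + t • y - p k = t • (y - p k) := by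
      rw [sub_smul, smul_sub, one_smul]; abel
    rw [e, Matrix.mulVec_smul, dotp_smul', sqn_smul] at h1
    simp only [smul_eq_mul] at hc
    have : 0 ≤ t * (a + t * q / 2) := by
      rw [ha]; nlinarith
    exact nonneg_of_mul_nonneg_right this ht0
  by_contra hneg
  push Not at hneg
  have hd : 0 < q - a := by linarith
  have h1 := key (-a / (q - a)) (div_pos (by linarith) hd) (by rw [div_le_one hd]; linarith)
  have h2 : -a / (q - a) * q ≤ -a := by
    rw [div_mul_eq_mul_div, div_le_iff₀ hd]; nlinarith
  linarith

/-- prefix point -/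
def Wp {K N : ℕ} (x xp : Fin K → Fin N → ℝ) (i : ℕ) : Fin K → Fin N → ℝ :=
  fun j => if (j : ℕ) < i then xp j else x j

lemma wpt_eq {K N : ℕ} (x xp : Fin K → Fin N → ℝ) (k : Fin K) : wpt x xp k = Wp x xp k := rfl

lemma Wp_upd {K N : ℕ} (x xp : Fin K → Fin N → ℝ) (k : Fin K) (y : Fin N → ℝ) :
    Function.update (Wp x xp k) k y = Function.update (Wp x xp (k + 1)) k y := by
  funext j
  by_cases hj : j = k
  · subst hj; simp
  · rw [Function.update_of_ne hj, Function.update_of_ne hj]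
    have : (j : ℕ) ≠ k := fun h => hj (Fin.ext h)
    have h2 : (j : ℕ) < k + 1 ↔ (j : ℕ) < k := by omega
    simp only [Wp, h2]

lemma Wp_self {K N : ℕ} (x xp : Fin K → Fin N → ℝ) (k : Fin K) :
    Wp x xp (k + 1) k = xp k := by simp [Wp]

lemma Wp_self' {K N : ℕ} (x xp : Fin K → Fin N → ℝ) (k : Fin K) :
    Wp x xp k k = x k := by simp [Wp]

lemma Wp_zero {K N : ℕ} (x xp : Fin K → Fin N → ℝ) : Wp x xp 0 = x := by
  funext j; simp [Wp]

lemma Wp_last {K N : ℕ} (x xp : Fin K → Fin N → ℝ) : Wp x xp K = xp := by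
  funext j; simp [Wp]

lemma step_vi {K M N : ℕ} {A : Fin K → Matrix (Fin M) (Fin N) ℝ}
    {b : Fin M → ℝ} {h : Fin K → (Fin N → ℝ) → ℝ} {X : Fin K → Set (Fin N → ℝ)}
    (hXcv : ∀ k, Convex ℝ (X k)) (hhcv : ∀ k, ConvexOn ℝ Set.univ (h k))
    {x xp : Fin K → Fin N → ℝ} (hs : BCDStep A b h X x xp) (k : Fin K)
    (y : Fin N → ℝ) (hy : y ∈ X k) :
    0 ≤ dotp (resid A b (Wp x xp (k + 1))) ((A k).mulVec (y - xp k)) + (h k y - h k (xp k)) := by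
  have := vi A b h (Wp x xp (k + 1)) k (X k) (hXcv k) (hhcv k)
    (by rw [Wp_self]; exact (hs k).1) (by
      intro z hz
      have := (hs k).2 z hz
      rw [wpt_eq, Wp_upd, Wp_upd] at this
      conv at this => lhs; rw [← Wp_self x xp k, Function.update_eq_self]
      exact this) y hy
  rwa [Wp_self] at this

lemma descent {K M N : ℕ} {A : Fin K → Matrix (Fin M) (Fin N) ℝ}
    {b : Fin M → ℝ} {h : Fin K → (Fin N → ℝ) → ℝ} {X : Fin K → Set (Fin N → ℝ)}
    (hXcv : ∀ k, Convex ℝ (X k)) (hhcv : ∀ k, ConvexOn ℝ Set.univ (h k))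
    {x xp : Fin K → Fin N → ℝ} (hs : BCDStep A b h X x xp) (hx : ∀ k, x k ∈ X k) :
    (1/2) * ∑ k, sqnorm ((A k).mulVec (xp k - x k)) ≤ fq A b h x - fq A b h xp := by
  have tel : ∑ k : Fin K, (fq A b h (Wp x xp k) - fq A b h (Wp x xp (k + 1)))
      = fq A b h x - fq A b h xp := by
    rw [Fin.sum_univ_eq_sum_range (fun i => fq A b h (Wp x xp i) - fq A b h (Wp x xp (i + 1))),
      Finset.sum_range_sub', Wp_zero, Wp_last]
  rw [← tel, Finset.mul_sum]
  refine Finset.sum_le_sum fun k _ => ?_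
  have h1 := step_vi hXcv hhcv hs k (x k) (hx k)
  have h2 : Wp x xp k = Function.update (Wp x xp (k + 1)) k (x k) := by
    rw [← Wp_upd]
    conv_rhs => rw [← Wp_self' x xp k, Function.update_eq_self]
  rw [h2, fq_upd, Wp_self]
  have h3 : sqnorm ((A k).mulVec (xp k - x k)) = sqnorm ((A k).mulVec (x k - xp k)) := by
    rw [← sqn_neg, ← Matrix.mulVec_neg, neg_sub]
  rw [h3]
  linarith

lemma costgo {K M N : ℕ} {A : Fin K → Matrix (Fin M) (Fin N) ℝ}
    {b : Fin M → ℝ} {h : Fin K → (Fin N → ℝ) → ℝ} {X : Fin K → Set (Fin N → ℝ)}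
    (hXcv : ∀ k, Convex ℝ (X k)) (hhcv : ∀ k, ConvexOn ℝ Set.univ (h k))
    {x xp : Fin K → Fin N → ℝ} (hs : BCDStep A b h X x xp)
    (y : Fin K → Fin N → ℝ) (hy : ∀ k, y k ∈ X k) :
    fq A b h xp - fq A b h y ≤
      ∑ k : Fin K, dotp (resid A b xp - resid A b (Wp x xp (k + 1)))
        ((A k).mulVec (xp k - y k)) := by
  have hr : resid A b y = resid A b xp + ∑ k, (A k).mulVec (y k - xp k) := by
    unfold resid
    simp only [Matrix.mulVec_sub, Finset.sum_sub_distrib]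
    abel
  have hf : fq A b h xp - fq A b h y ≤
      -∑ k, dotp (resid A b xp) ((A k).mulVec (y k - xp k)) - ∑ k, (h k (y k) - h k (xp k)) := by
    unfold fq gq
    rw [hr, sqn_add, dotp_sum_right, Finset.sum_sub_distrib]
    have := sqn_nonneg (∑ k, (A k).mulVec (y k - xp k))
    linarith
  refine hf.trans ?_
  rw [← Finset.sum_neg_distrib, ← Finset.sum_sub_distrib]
  refine Finset.sum_le_sum fun k _ => ?_
  have h1 := step_vi hXcv hhcv hs k (y k) (hy k)
  have h3 : (A k).mulVec (xp k - y k) = - (A k).mulVec (y k - xp k) := by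
    rw [← Matrix.mulVec_neg, neg_sub]
  rw [h3, dotp_neg', dotp_sub_left']
  linarith

lemma resid_diff {K M N : ℕ} (A : Fin K → Matrix (Fin M) (Fin N) ℝ)
    (b : Fin M → ℝ) (x xp : Fin K → Fin N → ℝ) (i : ℕ) :
    sqnorm (resid A b xp - resid A b (Wp x xp i)) ≤
      K * ∑ k, sqnorm ((A k).mulVec (xp k - x k)) := by
  have : resid A b xp - resid A b (Wp x xp i) = ∑ k, (A k).mulVec (xp k - Wp x xp i k) := by
    unfold resid
    simp only [Matrix.mulVec_sub, Finset.sum_sub_distrib]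
    abel
  rw [this]
  refine (sqn_sum_le _).trans ?_
  refine mul_le_mul_of_nonneg_left ?_ (Nat.cast_nonneg _)
  refine Finset.sum_le_sum fun k _ => ?_
  unfold Wp
  split_ifs
  · have : sqnorm ((A k).mulVec (xp k - xp k)) = 0 := by simp [sqnorm]
    rw [this]; exact sqn_nonneg _
  · exact le_rfl

lemma rec_rate (D : ℕ → ℝ) (C : ℝ) (hD : ∀ n, 0 ≤ D n) (h0 : D 0 ≤ C)
    (hrec : ∀ n, D (n + 1) ^ 2 ≤ C * (D n - D (n + 1))) (hmono : ∀ n, D (n + 1) ≤ D n) (r : ℕ) :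
    D (r + 1) ≤ 3 * C / (r + 1) := by
  have hC : 0 ≤ C := (hD 0).trans h0
  induction r with
  | zero => have := hmono 0; norm_num; norm_num at this; linarith
  | succ r ih =>
    push_cast
    by_contra hlt
    push Not at hlt
    have h1 := hrec (r + 1)
    have hs : (0 : ℝ) < r + 1 := by positivity
    have hs2 : (0 : ℝ) < (r : ℝ) + 1 + 1 := by positivity
    have hq : 0 ≤ 3 * C / ((r : ℝ) + 1 + 1) := by positivity
    have h2 : (3 * C / ((r : ℝ) + 1 + 1)) ^ 2 < D (r + 1 + 1) ^ 2 := by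
      exact pow_lt_pow_left₀ hlt hq (by norm_num)
    have h3 : C * (D (r + 1) - D (r + 1 + 1)) ≤
        C * (3 * C / ((r : ℝ) + 1) - 3 * C / ((r : ℝ) + 1 + 1)) :=
      mul_le_mul_of_nonneg_left (by linarith) hC
    have h4 : C * (3 * C / ((r : ℝ) + 1) - 3 * C / ((r : ℝ) + 1 + 1)) ≤
        (3 * C / ((r : ℝ) + 1 + 1)) ^ 2 := by
      have : (3 * C / ((r : ℝ) + 1 + 1)) ^ 2 - C * (3 * C / ((r : ℝ) + 1) - 3 * C / ((r : ℝ) + 1 + 1))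
          = 3 * C ^ 2 * (2 * r + 1) / (((r : ℝ) + 1 + 1) ^ 2 * (r + 1)) := by
        field_simp; ring
      have h5 : 0 ≤ 3 * C ^ 2 * (2 * r + 1) / (((r : ℝ) + 1 + 1) ^ 2 * (r + 1)) := by positivity
      linarith
    linarith

/-- Theorem 2, case 3: iteration complexity of cyclic exact BCD
for general matrices `A_k`. -/
theorem bcd_rate_general {K M N : ℕ} (hK : 1 ≤ K) (hM : 1 ≤ M) (hN : 1 ≤ N)
    (A : Fin K → Matrix (Fin M) (Fin N) ℝ) (b : Fin M → ℝ)
    (X : Fin K → Set (Fin N → ℝ)) (h : Fin K → (Fin N → ℝ) → ℝ)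
    (hXne : ∀ k, (X k).Nonempty) (hXcl : ∀ k, IsClosed (X k))
    (hXcv : ∀ k, Convex ℝ (X k))
    (hhcv : ∀ k, ConvexOn ℝ Set.univ (h k))
    (hhlsc : ∀ k, LowerSemicontinuous (h k))
    (x : ℕ → Fin K → Fin N → ℝ) (hx0 : ∀ k, x 0 k ∈ X k)
    (hstep : ∀ r : ℕ, BCDStep A b h X (x r) (x (r + 1)))
    (xstar : Fin K → Fin N → ℝ) (hxstarX : ∀ k, xstar k ∈ X k)
    (hxstar : ∀ y : Fin K → Fin N → ℝ, (∀ k, y k ∈ X k) → fq A b h xstar ≤ fq A b h y)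
    (R0 : ℝ)
    (hR0 : ∀ z : Fin K → Fin N → ℝ, (∀ k, z k ∈ X k) → fq A b h z ≤ fq A b h (x 0) →
      ∀ y : Fin K → Fin N → ℝ, (∀ k, y k ∈ X k) →
        (∀ z' : Fin K → Fin N → ℝ, (∀ k, z' k ∈ X k) → fq A b h y ≤ fq A b h z') →
        Real.sqrt (∑ k, sqnorm (z k - y k)) ≤ R0)
    (r : ℕ) :
    fq A b h (x (r + 1)) - fq A b h xstar ≤
      3 * max (fq A b h (x 0) - fq A b h xstar)
          (2 * R0 ^ 2 * maxOf hK (fun k => lamMaxQ (A k)) * (1 + (K : ℝ) ^ 2)) /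
        (r + 1) := by
  have hxX : ∀ n k, x n k ∈ X k := by
    intro n
    cases n with
    | zero => exact hx0
    | succ n => exact fun k => (hstep n k).1
  have hdes := fun n => descent hXcv hhcv (hstep n) (hxX n)
  have hmono : ∀ n, fq A b h (x (n + 1)) ≤ fq A b h (x n) := by
    intro n
    have h1 := hdes n
    have h2 : 0 ≤ ∑ k, sqnorm ((A k).mulVec (x (n + 1) k - x n k)) :=
      Finset.sum_nonneg fun k _ => sqn_nonneg _
    linarith
  have hanti : Antitone fun n => fq A b h (x n) := antitone_nat_of_succ_le hmono
  set L := maxOf hK (fun k => lamMaxQ (A k)) with hL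
  have hLk : ∀ k, lamMaxQ (A k) ≤ L := fun k =>
    Finset.le_sup' (fun k => lamMaxQ (A k)) (Finset.mem_univ k)
  have hL0 : 0 ≤ L := (lam_nonneg _).trans (hLk ⟨0, hK⟩)
  refine rec_rate (fun n => fq A b h (x n) - fq A b h xstar) _
    (fun n => sub_nonneg.2 (hxstar _ (hxX n))) (le_max_left _ _) ?_
    (fun n => by have := hmono n; linarith) r
  intro n
  rw [sub_sub_sub_cancel_right]
  have hnn : 0 ≤ fq A b h (x n) - fq A b h (x (n + 1)) := sub_nonneg.2 (hmono n)
  refine le_trans ?_ (mul_le_mul_of_nonneg_right (le_max_right _ _) hnn)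
  have hR : ∑ k, sqnorm (x (n + 1) k - xstar k) ≤ R0 ^ 2 :=
    (Real.sqrt_le_iff.1 (hR0 (x (n + 1)) (hxX _) (hanti (Nat.zero_le _)) xstar hxstarX hxstar)).2
  have hc := costgo hXcv hhcv (hstep n) xstar hxstarX
  have hp : 0 ≤ fq A b h (x (n + 1)) - fq A b h xstar := sub_nonneg.2 (hxstar _ (hxX _))
  have hsq := (pow_le_pow_left₀ hp hc 2).trans (cs_block _ _)
  set D := ∑ k, sqnorm ((A k).mulVec (x (n + 1) k - x n k)) with hD
  have hD0 : 0 ≤ D := Finset.sum_nonneg fun k _ => sqn_nonneg _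
  have hE : ∑ k : Fin K, sqnorm (resid A b (x (n + 1)) - resid A b (Wp (x n) (x (n + 1)) (k + 1)))
      ≤ K * (K * D) := by
    refine (Finset.sum_le_sum fun (k : Fin K) _ => resid_diff A b (x n) (x (n + 1)) ((k : ℕ) + 1)).trans ?_
    simp [hD]
  have hF : ∑ k, sqnorm ((A k).mulVec (x (n + 1) k - xstar k)) ≤ L * R0 ^ 2 := by
    refine le_trans ?_ (mul_le_mul_of_nonneg_left hR hL0)
    rw [Finset.mul_sum]
    exact Finset.sum_le_sum fun k _ => (lam_bound _ _).trans
      (mul_le_mul_of_nonneg_right (hLk k) (sqn_nonneg _))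
  have hfin := hsq.trans (mul_le_mul hE hF (Finset.sum_nonneg fun k _ => sqn_nonneg _)
    (by positivity))
  refine hfin.trans ?_
  have hd := hdes n
  rw [← hD] at hd
  have hLR : 0 ≤ L * R0 ^ 2 := by positivity
  calc (K : ℝ) * (K * D) * (L * R0 ^ 2) = (2 * R0 ^ 2 * L * (K : ℝ) ^ 2) * (1 / 2 * D) := by ring
    _ ≤ (2 * R0 ^ 2 * L * (1 + (K : ℝ) ^ 2)) * (1 / 2 * D) := by
        refine mul_le_mul_of_nonneg_right ?_ (by positivity)
        refine mul_le_mul_of_nonneg_left (by linarith) (by positivity)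
    _ ≤ _ := mul_le_mul_of_nonneg_left hd (by positivity)
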